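/- Every monomially irreducible integer N with 2 ≤ N ≤ 17440 is either a prime number or belongs to {4, 6, 8, 12, 24}. -/

import Mathlib

namespace Monomial

/-- The elementary matrix `[[a, -1], [1, 0]]` over `ZMod N`. -/
def mat {N : ℕ} (a : ZMod N) : Matrix (Fin 2) (Fin 2) (ZMod N) := !![a, -1; 1, 0]

/-- `M [a₁, …, aₙ] = mat aₙ * ⋯ * mat a₁`. -/
def M {N : ℕ} (l : List (ZMod N)) : Matrix (Fin 2) (Fin 2) (ZMod N) :=
  (l.reverse.map mat).prod

/-- A tuple is a solution of (E_N) if the associated matrix is `±Id`. -/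
def IsSolution {N : ℕ} (l : List (ZMod N)) : Prop := M l = 1 ∨ M l = -1

/-- The sum `(a₁,…,aₙ) ⊕ (b₁,…,bₘ) = (a₁+bₘ, a₂,…,aₙ₋₁, aₙ+b₁, b₂,…,bₘ₋₁)`. -/
def osum {N : ℕ} (u v : List (ZMod N)) : List (ZMod N) :=
  (u.headI + v.getLastD 0) ::
    ((u.drop 1).dropLast ++ (u.getLastD 0 + v.headI) :: (v.drop 1).dropLast)

/-- Equivalence: `v` is a cyclic permutation of `u` or of the reversal of `u`. -/
def CyclicEquiv {N : ℕ} (u v : List (ZMod N)) : Prop :=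
  (∃ i, v = u.rotate i) ∨ (∃ i, v = u.reverse.rotate i)

/-- A tuple is reducible if, up to equivalence, it is a sum of an `m`-tuple (`m ≥ 3`)
with a solution of size `l ≥ 3`. -/
def Reducible {N : ℕ} (c : List (ZMod N)) : Prop :=
  ∃ a b : List (ZMod N), 3 ≤ a.length ∧ 3 ≤ b.length ∧ IsSolution b ∧
    CyclicEquiv c (osum a b)

/-- An irreducible solution: a solution which is not reducible (and `(0,0)` is
not considered irreducible). -/
def IrreducibleSol {N : ℕ} (c : List (ZMod N)) : Prop :=
  IsSolution c ∧ ¬ Reducible c ∧ c ≠ [0, 0]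

/-- The size of the `k`-monomial minimal solution of (E_N): the least `n > 0` such
that the constant `n`-tuple `(k, …, k)` is a solution. -/
noncomputable def monomialMinimalSize (N : ℕ) (k : ZMod N) : ℕ :=
  sInf {n | 0 < n ∧ IsSolution (List.replicate n k)}

/-- `N` is monomially irreducible if, for every `k ≠ 0`, the `k`-monomial minimal
solution of (E_N) is irreducible. -/
def MonomiallyIrreducible (N : ℕ) : Prop :=
  ∀ k : ZMod N, k ≠ 0 → IrreducibleSol (List.replicate (monomialMinimalSize N k) k)

/-- The continuant `Kₙ(x, …, x)` at a constant tuple: `K₀ = 1`, `K₁ = x`,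
`Kₙ₊₂ = x * Kₙ₊₁ - Kₙ`. -/
def K {N : ℕ} (x : ZMod N) : ℕ → ZMod N
  | 0 => 1
  | 1 => x
  | n + 2 => x * K x (n + 1) - K x n


/-- Shifted Chebyshev-type sequence. -/
def U {R : Type*} [CommRing R] (k : R) : ℕ → R
  | 0 => 0
  | 1 => 1
  | n + 2 => k * U k (n + 1) - U k n

theorem U_add_two {R : Type*} [CommRing R] (k : R) (n : ℕ) :
    U k (n + 2) = k * U k (n + 1) - U k n := rfl

theorem U_cast (c : ℕ) (k : ℤ) (n : ℕ) : ((U k n : ℤ) : ZMod c) = U (k : ZMod c) n := by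
  induction n using Nat.strong_induction_on with
  | _ n ih =>
    match n with
    | 0 => simp [U]
    | 1 => simp [U]
    | n + 2 =>
      rw [U_add_two, U_add_two, ← ih (n + 1) (by omega), ← ih n (by omega)]
      push_cast
      ring

theorem U_negtwo {R : Type*} [CommRing R] (n : ℕ) :
    U (-2 : R) (2 * n) = -(2 * n) ∧ U (-2 : R) (2 * n + 1) = 2 * n + 1 := by
  induction n with
  | zero => simp [U]
  | succ n ih =>
    have h1 : U (-2 : R) (2 * n + 2) = -(2 * (n + 1)) := by
      rw [U_add_two, ih.1, ih.2]; ring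
    have h2 : U (-2 : R) (2 * n + 3) = 2 * (n + 1) + 1 := by
      rw [U_add_two, h1, ih.2]; ring
    refine ⟨?_, ?_⟩
    · rw [show 2 * (n + 1) = 2 * n + 2 by ring, h1]; push_cast; ring
    · rw [show 2 * (n + 1) + 1 = 2 * n + 3 by ring, h2]; push_cast; ring

theorem U_negone {R : Type*} [CommRing R] (n : ℕ) :
    U (-1 : R) (3 * n) = 0 ∧ U (-1 : R) (3 * n + 1) = 1 ∧ U (-1 : R) (3 * n + 2) = -1 := by
  induction n with
  | zero => simp [U]
  | succ n ih =>
    obtain ⟨h0, h1, h2⟩ := ih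
    have h3 : U (-1 : R) (3 * n + 3) = 0 := by rw [U_add_two, h2, h1]; ring
    have h4 : U (-1 : R) (3 * n + 4) = 1 := by rw [U_add_two, h3, h2]; ring
    have h5 : U (-1 : R) (3 * n + 5) = -1 := by rw [U_add_two, h4, h3]; ring
    exact ⟨h3, h4, h5⟩

theorem mat_pow {N : ℕ} (k : ZMod N) (n : ℕ) :
    mat k ^ n = !![U k (n + 1), -U k n; U k n, U k (n + 1) - k * U k n] := by
  induction n with
  | zero => simp [U, Matrix.one_fin_two]
  | succ n ih =>
    rw [pow_succ', ih, mat, Matrix.mul_fin_two, U_add_two]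
    ext i j
    fin_cases i <;> fin_cases j <;> simp <;> ring

theorem U_det {R : Type*} [CommRing R] (k : R) (n : ℕ) :
    U k (n + 1) ^ 2 - k * U k n * U k (n + 1) + U k n ^ 2 = 1 := by
  induction n with
  | zero => simp [U]
  | succ n ih => rw [U_add_two, ← ih]; ring

theorem M_replicate {N : ℕ} (k : ZMod N) (n : ℕ) : M (List.replicate n k) = mat k ^ n := by
  simp [M]

theorem exists_sol {N : ℕ} (h2 : 2 ≤ N) (k : ZMod N) :
    ∃ n, 0 < n ∧ IsSolution (List.replicate n k) := by
  have : NeZero N := ⟨by omega⟩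
  have hdet : IsUnit (mat k) := by
    rw [Matrix.isUnit_iff_isUnit_det]
    simp [mat, Matrix.det_fin_two]
  obtain ⟨u, hu⟩ := hdet
  refine ⟨orderOf u, orderOf_pos u, Or.inl ?_⟩
  rw [M_replicate, ← hu, ← Units.val_pow_eq_pow_val, pow_orderOf_eq_one]
  rfl

theorem not_mi {N : ℕ} (h2 : 2 ≤ N) (k : ZMod N) (m : ℕ)
    (h1 : U k (m + 1) = 1 ∨ U k (m + 1) = -1) (h0 : U k m ≠ 0) (h3 : U k (m + 2) ≠ 0) :
    ¬ MonomiallyIrreducible N := by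
  intro hmi
  have : Fact (1 < N) := ⟨by omega⟩
  have hk : k ≠ 0 := by
    rintro rfl
    rw [U_add_two, zero_mul, zero_sub] at h3
    have hd := U_det (0 : ZMod N) m
    rcases h1 with h1 | h1 <;> rw [h1] at hd <;>
    · clear h1
      have hz : ∀ n, U (0 : ZMod N) n = 0 ∨ U (0 : ZMod N) (n + 1) = 0 := by
        intro n
        induction n with
        | zero => left; rfl
        | succ n ih =>
          rcases ih with ih | ih
          · right; rw [U_add_two, ih]; ring
          · left; exact ih
      rcases hz m with hz | hz
      · exact h0 hz
      · have := U_det (0 : ZMod N) m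
        simp_all
  obtain ⟨hsol, hirr, -⟩ := hmi k hk
  apply hirr
  have hpos : 0 < monomialMinimalSize N k := (Nat.sInf_mem (exists_sol h2 k)).1
  generalize monomialMinimalSize N k = n at *
  rw [IsSolution, M_replicate] at hsol
  -- reduce m modulo n
  have hq : ∀ q, (mat k ^ n) ^ q = 1 ∨ (mat k ^ n) ^ q = -1 := by
    intro q
    rcases hsol with h | h <;> rw [h]
    · simp
    · exact neg_one_pow_eq_or _ q
  have hm : mat k ^ m = mat k ^ (m % n) ∨ mat k ^ m = - mat k ^ (m % n) := by
    have : mat k ^ m = (mat k ^ n) ^ (m / n) * mat k ^ (m % n) := by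
      rw [← pow_mul, ← pow_add, Nat.div_add_mod]
    rcases hq (m / n) with h | h <;> rw [this, h] <;> simp
  have hlt : m % n < n := Nat.mod_lt _ hpos
  generalize m % n = r at *
  have key : (U k (r + 1) = 1 ∨ U k (r + 1) = -1) ∧ U k r ≠ 0 ∧ U k (r + 2) ≠ 0 := by
    rw [mat_pow, mat_pow] at hm
    rw [U_add_two] at h3 ⊢
    rcases hm with hm | hm
    · have e1 := congrFun (congrFun hm 0) 0
      have e2 := congrFun (congrFun hm 1) 0
      simp at e1 e2
      rw [← e1, ← e2]
      exact ⟨h1, h0, h3⟩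
    · have e1 := congrFun (congrFun hm 0) 0
      have e2 := congrFun (congrFun hm 1) 0
      simp at e1 e2
      rw [e1] at h1 h3
      rw [e2] at h0 h3
      refine ⟨?_, ?_, ?_⟩
      · rcases h1 with h1 | h1
        · right; rw [← h1]; ring
        · left; linear_combination -h1
      · simpa using h0
      · intro h; apply h3; linear_combination -h
  obtain ⟨g1, g0, g2⟩ := key
  have hU : U k n = 0 := by
    rw [mat_pow] at hsol
    rcases hsol with h | h
    · have := congrFun (congrFun h 1) 0
      simpa using this
    · have := congrFun (congrFun h 1) 0
      simpa using this
  have hr0 : 1 ≤ r := by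
    rcases Nat.eq_zero_or_pos r with h | h
    · subst h; exact absurd rfl g0
    · exact h
  have hr1 : n ≠ r + 1 := by
    rintro rfl
    rw [hU] at g1
    rcases g1 with g | g <;> simp at g
  have hr2 : n ≠ r + 2 := by
    rintro rfl
    exact g2 hU
  obtain ⟨s, rfl⟩ : ∃ s, n = r + 3 + s := ⟨n - (r + 3), by omega⟩
  set x := U k (r + 1) * U k r with hx
  refine ⟨(k - x) :: (List.replicate (s + 1) k ++ [k - x]), x :: (List.replicate r k ++ [x]),
    by simp, by simp; omega, ?_, Or.inl ⟨0, ?_⟩⟩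
  · have hM : M (x :: (List.replicate r k ++ [x])) = mat x * mat k ^ r * mat x := by
      simp [M, mul_assoc]
    rw [IsSolution, hM, mat_pow, mat, Matrix.mul_fin_two, Matrix.mul_fin_two, hx]
    have hd := U_det k r
    generalize U k r = c at *
    rcases g1 with g | g <;> rw [g] at hd ⊢
    · right
      ext i j
      fin_cases i <;> fin_cases j <;> simp <;> linear_combination -hd
    · left
      ext i j
      fin_cases i <;> fin_cases j <;> simp <;> linear_combination hd
  · rw [List.rotate_zero]
    have e : osum ((k - x) :: (List.replicate (s + 1) k ++ [k - x]))
        (x :: (List.replicate r k ++ [x])) =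
        k :: (List.replicate (s + 1) k ++ k :: List.replicate r k) := by
      have hl : ∀ (y z : ZMod N) (l : List (ZMod N)), (y :: (l ++ [z])).getLastD 0 = z := by
        intro y z l
        rw [← List.cons_append, List.getLastD_concat]
      rw [osum, hl, hl]
      simp
    rw [e]
    rw [List.eq_replicate_iff]
    refine ⟨by simp; omega, ?_⟩
    intro b hb
    simp at hb
    tauto

theorem not_mi_sq {N : ℕ} (q : ℕ) (hN : 2 ≤ N) (hq : 3 ≤ q) (hd : q ^ 2 ∣ N) :
    ¬ MonomiallyIrreducible N := by
  obtain ⟨t, rfl⟩ := hd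
  have ht : 0 < t := by
    rcases Nat.eq_zero_or_pos t with h | h
    · subst h; omega
    · exact h
  have hk2 : ((q * t : ℕ) : ZMod (q ^ 2 * t)) ^ 2 = 0 := by
    rw [← Nat.cast_pow, ZMod.natCast_eq_zero_iff]
    exact ⟨t, by ring⟩
  have hk1 : ∀ j, 0 < j → j < 3 → ((j * (q * t) : ℕ) : ZMod (q ^ 2 * t)) ≠ 0 := by
    intro j hj hj3 h
    rw [ZMod.natCast_eq_zero_iff] at h
    have := Nat.le_of_dvd (by positivity) h
    have : q * (q * t) ≤ j * (q * t) := by nlinarith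
    have := Nat.le_of_mul_le_mul_right this (by positivity)
    omega
  apply not_mi hN ((q * t : ℕ) : ZMod (q ^ 2 * t)) 2
  · right
    simp only [U]
    linear_combination hk2
  · have := hk1 1 (by norm_num) (by norm_num)
    rw [one_mul] at this
    simpa only [U, mul_one, sub_zero] using this
  · have := hk1 2 (by norm_num) (by norm_num)
    intro h
    apply this
    simp only [U] at h
    generalize hk : ((q * t : ℕ) : ZMod (q ^ 2 * t)) = k at *
    rw [Nat.cast_mul, hk]
    push_cast
    linear_combination -h + k * hk2

theorem not_mi_prod {w d : ℕ} (hw : 2 ≤ w) (hd : 3 ≤ d) (hodd : d % 2 = 1)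
    (h3 : Nat.Coprime 3 d) (hc : Nat.Coprime w d) : ¬ MonomiallyIrreducible (w * d) := by
  have : Fact (1 < w) := ⟨by omega⟩
  obtain ⟨κ, hκw, hκd⟩ := Nat.chineseRemainder hc (w - 1) (d - 2)
  have h6 : Nat.Coprime 3 (2 * d) := Nat.Coprime.mul_right (by norm_num) h3
  obtain ⟨m, hm3, hmd⟩ := Nat.chineseRemainder h6 0 (d - 2)
  have hkw : ((κ : ℤ) : ZMod w) = -1 := by
    have := (ZMod.natCast_eq_natCast_iff _ _ _).2 hκw
    rw [Int.cast_natCast, this, Nat.cast_sub (by omega)]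
    simp
  have hkd : ((κ : ℤ) : ZMod d) = -2 := by
    have := (ZMod.natCast_eq_natCast_iff _ _ _).2 hκd
    rw [Int.cast_natCast, this, Nat.cast_sub (by omega)]
    simp
  obtain ⟨j, rfl⟩ : 3 ∣ m := (Nat.modEq_zero_iff_dvd).1 hm3
  have hpar : (3 * j) % 2 = 1 := by
    have : 3 * j ≡ d - 2 [MOD 2] := hmd.of_mul_right d
    have : (3 * j) % 2 = (d - 2) % 2 := this
    omega
  obtain ⟨i, hi⟩ : ∃ i, 3 * j = 2 * i + 1 := ⟨3 * j / 2, by omega⟩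
  have hmd' : ((3 * j : ℕ) : ZMod d) = -2 := by
    have := (ZMod.natCast_eq_natCast_iff _ _ _).2 (hmd.of_mul_left 2)
    rw [this, Nat.cast_sub (by omega)]
    simp
  have hid : (2 * (i : ZMod d) + 1) = -2 := by
    rw [← hmd', hi]; push_cast; ring
  have tr : ∀ (c : ℕ) (n : ℕ) (a : ℤ), ((c : ℤ) ∣ U (κ : ℤ) n - a) ↔
      U ((κ : ℤ) : ZMod c) n = a := by
    intro c n a
    rw [← U_cast, ← ZMod.intCast_zmod_eq_zero_iff_dvd]
    push_cast
    exact sub_eq_zero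
  have hNN : ∀ n, U ((κ : ℤ) : ZMod (w * d)) n = 0 →
      U ((κ : ℤ) : ZMod w) n = 0 ∧ U ((κ : ℤ) : ZMod d) n = 0 := by
    intro n h
    have h' := (tr (w * d) n 0).2 (by simpa using h)
    push_cast at h'
    exact ⟨by simpa using (tr w n 0).1 (dvd_trans (dvd_mul_right _ _) h'),
      by simpa using (tr d n 0).1 (dvd_trans (dvd_mul_left _ _) h')⟩
  apply not_mi (by nlinarith) ((κ : ℤ) : ZMod (w * d)) (3 * j)
  · left
    have hw1 : ((w : ℤ) ∣ U (κ : ℤ) (3 * j + 1) - 1) := by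
      rw [tr, hkw, (U_negone j).2.1]; simp
    have hd1 : ((d : ℤ) ∣ U (κ : ℤ) (3 * j + 1) - 1) := by
      rw [tr, hkd, hi, show 2 * i + 1 + 1 = 2 * (i + 1) by ring, (U_negtwo (i + 1)).1]
      push_cast
      linear_combination -hid
    have := (tr (w * d) (3 * j + 1) 1).1 (by
      push_cast
      exact IsCoprime.mul_dvd (Nat.isCoprime_iff_coprime.2 hc) hw1 hd1)
    simpa using this
  · intro h
    have := (hNN _ h).2
    rw [hkd, hi, (U_negtwo i).2, hid] at this
    have h2 : ((2 : ℕ) : ZMod d) = 0 := by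
      push_cast; linear_combination -this
    rw [ZMod.natCast_eq_zero_iff] at h2
    have := Nat.le_of_dvd (by norm_num) h2
    omega
  · intro h
    have := (hNN _ h).1
    rw [hkw, (U_negone j).2.2] at this
    simp at this

theorem stmt19 (N : ℕ) (h2 : 2 ≤ N) (h : N ≤ 17440)
    (hmi : MonomiallyIrreducible N) :
    N.Prime ∨ N ∈ ({4, 6, 8, 12, 24} : Set ℕ) := by
  clear h
  by_cases hp : ∃ p, p.Prime ∧ 5 ≤ p ∧ p ∣ N
  · obtain ⟨p, hp, h5, w, rfl⟩ := hp
    by_cases hw : w = 1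
    · left; subst hw; simpa using hp
    exfalso
    by_cases hpw : p ∣ w
    · refine not_mi_sq p h2 (by omega) ?_ hmi
      rw [pow_two]
      exact mul_dvd_mul_left p hpw
    · have hw2 : 2 ≤ w := by
        rcases Nat.eq_zero_or_pos w with h0 | h0
        · subst h0; simp at h2
        · omega
      rw [mul_comm] at hmi
      refine not_mi_prod hw2 (by omega) ?_ ?_ ?_ hmi
      · rcases hp.eq_two_or_odd with h | h
        · omega
        · exact h
      · exact (Nat.coprime_primes Nat.prime_three hp).2 (by omega)
      · exact ((Nat.Prime.coprime_iff_not_dvd hp).2 hpw).symm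
  · push Not at hp
    have h9 : ¬ 3 ^ 2 ∣ N := fun hd => not_mi_sq 3 h2 (by norm_num) hd hmi
    have h16 : ¬ 4 ^ 2 ∣ N := fun hd => not_mi_sq 4 h2 (by norm_num) hd hmi
    have hN0 : N ≠ 0 := by omega
    have hdvd : N ∣ 24 := by
      rw [← Nat.factorization_le_iff_dvd hN0 (by norm_num)]
      intro p
      by_cases hpp : p.Prime
      · by_cases hpN : p ∣ N
        · have hlt : p < 5 := by
            by_contra hge
            exact hp p hpp (by omega) hpN
          interval_cases p
          · exact absurd hpp (by decide)
          · exact absurd hpp (by decide)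
          · calc N.factorization 2 ≤ 3 := by
                  by_contra hgt
                  exact h16 ((Nat.prime_two.pow_dvd_iff_le_factorization hN0 (k := 4)).2 (by omega))
              _ ≤ _ := (Nat.prime_two.pow_dvd_iff_le_factorization (by norm_num)).1 (by norm_num)
          · calc N.factorization 3 ≤ 1 := by
                  by_contra hgt
                  exact h9 ((Nat.prime_three.pow_dvd_iff_le_factorization hN0 (k := 2)).2 (by omega))
              _ ≤ _ := (Nat.prime_three.pow_dvd_iff_le_factorization (by norm_num)).1 (by norm_num)
          · norm_num at hpp
        · rw [Nat.factorization_eq_zero_of_not_dvd hpN]; exact Nat.zero_le _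
      · rw [Nat.factorization_eq_zero_of_not_prime _ hpp]; exact Nat.zero_le _
    have hle := Nat.le_of_dvd (by norm_num) hdvd
    clear hmi hp h9 h16 hN0
    interval_cases N <;> first | (exfalso; revert hdvd; decide) | (left; norm_num; done) | (right; simp)

end Monomial
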